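/- Let g_1,…,g_m ∈ ℝ[x_1,…,x_n] and let V = {x ∈ ℝ^n : g_j(x) = 0 for j = 1,…,m}. Let f ∈ ℝ[x_1,…,x_n] be nonnegative on V. Then for every ε > 0 there exist r(ε) ∈ ℕ and a single nonnegative real scalar λ such that, for every r ≥ r(ε), the polynomial f + ε·θ_r + λ·∑_{j=1}^m g_j^2 is a sum of squares of real polynomials. -/

import Mathlib

open MvPolynomial MeasureTheory Filter Topology

/-- `θ_r(x) = ∑_{k=0}^r ∑_{i=1}^n x_i^{2k}/k!` as a polynomial in `ℝ[x_1,…,x_n]`. -/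
noncomputable def theta (n r : ℕ) : MvPolynomial (Fin n) ℝ :=
  ∑ k ∈ Finset.range (r + 1), ∑ i : Fin n,
    C ((1 : ℝ) / (Nat.factorial k : ℝ)) * X i ^ (2 * k)

/-- A polynomial is a sum of squares if it is a finite sum of squares of polynomials. -/
def IsSOS {n : ℕ} (p : MvPolynomial (Fin n) ℝ) : Prop :=
  ∃ (k : ℕ) (q : Fin k → MvPolynomial (Fin n) ℝ), p = ∑ i, q i ^ 2

/-!
Multiples `ε θ_r` absorb everything in the order on polynomials given by sums of squares, so if `p`
is nonnegative on `ℝⁿ` and no `p + ε θ_r` is a sum of squares, then Hahn–Banach yields a functional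
`L`, nonnegative on squares, with `L (x_i ^ (2k)) ≤ k!` for all `k` and `L p < 0`. These moment
bounds rule such an `L` out. They make `L` extend, coefficientwise, to the formal power series
`sin (t x_i)` and `cos (t x_i)` evaluated at a real number `t ≠ 0`. Since `1 - sin² = cos²`, the
elements `sin (t x_i)` behave like points of the cube `[-1, 1]ⁿ`, on which Bernstein approximation
shows positive functionals to be nonnegative on nonnegative polynomials. Hence
`L (p (t⁻¹ sin (t x_1), …, t⁻¹ sin (t x_n))) ≥ 0`, and `t → 0` gives `L p ≥ 0`.

For a polynomial `f` that is nonnegative only on the zero set of some `G ≥ 0`, the set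
`{f + ε θ_r ≤ 0}` is compact for suitable `r` and avoids that zero set, so that a large enough
multiple of `G` makes `f + ε θ_r + λ G` nonnegative on all of `ℝⁿ`.
-/

/-! ### Sums of squares and positive functionals -/

section SumSq

variable {R : Type*} [CommRing R]

lemma isSumSq_sq (a : R) : IsSumSq (a ^ 2) := (IsSquare.sq a).isSumSq

lemma isSumSq_pow_two_mul (a : R) (k : ℕ) : IsSumSq (a ^ (2 * k)) :=
  ((even_two_mul k).isSquare_pow a).isSumSq

lemma isSumSq_pow {a : R} (ha : IsSumSq a) (k : ℕ) : IsSumSq (a ^ k) := by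
  simpa only [Finset.prod_const, Finset.card_range] using
    IsSumSq.prod (I := Finset.range k) fun _ _ => ha

lemma isSumSq_sum_sub_sum {ι : Type*} {s t : Finset ι} (hst : s ⊆ t) {a : ι → R}
    (ha : ∀ j, IsSumSq (a j)) : IsSumSq (∑ j ∈ t, a j - ∑ j ∈ s, a j) := by
  classical
  rw [← Finset.sum_sdiff_eq_sub hst]
  exact IsSumSq.sum fun j _ => ha j

lemma isSumSq_smul [Algebra ℝ R] {c : ℝ} (hc : 0 ≤ c) {a : R} (ha : IsSumSq a) :
    IsSumSq (c • a) := by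
  rw [Algebra.smul_def, ← Real.sq_sqrt hc, map_pow]
  exact (isSumSq_sq _).mul ha

lemma isSumSq_half_smul_sq_add_sq_sub_mul [Algebra ℝ R] (a b : R) :
    IsSumSq ((1 / 2 : ℝ) • (a ^ 2 + b ^ 2) - a * b) := by
  have hsq : (1 / 2 : ℝ) • (a ^ 2 + b ^ 2) - a * b = (1 / 2 : ℝ) • (a - b) ^ 2 := by
    have htwo : a * b = (1 / 2 : ℝ) • (2 * (a * b)) := by
      rw [two_mul, ← two_smul ℝ, smul_smul]
      norm_num
    rw [htwo, ← smul_sub]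
    ring_nf
  rw [hsq]
  exact isSumSq_smul (by norm_num) (isSumSq_sq _)

lemma isSumSq_sub_mul_pow_sub_pow {a b : R} (ha : IsSumSq a) (hb : IsSumSq b) (k : ℕ) :
    IsSumSq ((a - b) * (a ^ k - b ^ k)) := by
  rw [← (Commute.all a b).mul_geom_sum₂, ← mul_assoc]
  exact (IsSumSq.mul_self _).mul <| IsSumSq.sum fun i _ => (isSumSq_pow ha i).mul (isSumSq_pow hb _)

lemma isSumSq_four_pow_mul_sub_add_pow (u v : R) (k : ℕ) :
    IsSumSq (4 ^ k * (u ^ (2 * k) + v ^ (2 * k)) - (u + v) ^ (2 * k)) := by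
  induction k with
  | zero => simp
  | succ k ih =>
    have hchebyshev := isSumSq_sub_mul_pow_sub_pow (isSumSq_sq u) (isSumSq_sq v) k
    have hpow : IsSumSq ((u - v) ^ 2 * (u ^ (2 * k) + v ^ (2 * k))) :=
      (isSumSq_sq _).mul ((isSumSq_pow_two_mul u k).add (isSumSq_pow_two_mul v k))
    have hfour : IsSumSq ((4 : R) ^ k) := isSumSq_pow (IsSumSq.natCast 4) k
    have hstep : 4 ^ (k + 1) * (u ^ (2 * (k + 1)) + v ^ (2 * (k + 1))) - (u + v) ^ (2 * (k + 1)) =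
        4 ^ k * ((u ^ 2 - v ^ 2) * ((u ^ 2) ^ k - (v ^ 2) ^ k) +
          (u ^ 2 - v ^ 2) * ((u ^ 2) ^ k - (v ^ 2) ^ k)) +
        4 ^ k * ((u - v) ^ 2 * (u ^ (2 * k) + v ^ (2 * k))) +
        (u + v) ^ 2 * (4 ^ k * (u ^ (2 * k) + v ^ (2 * k)) - (u + v) ^ (2 * k)) := by
      ring
    rw [hstep]
    exact ((hfour.mul (hchebyshev.add hchebyshev)).add (hfour.mul hpow)).add
      ((isSumSq_sq (u + v)).mul ih)

lemma isSumSq_four_pow_smul_sub_add_pow [Algebra ℝ R] (u v : R) (k : ℕ) :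
    IsSumSq ((4 ^ k : ℝ) • (u ^ (2 * k) + v ^ (2 * k)) - (u + v) ^ (2 * k)) := by
  rw [Algebra.smul_def, map_pow, map_ofNat]
  exact isSumSq_four_pow_mul_sub_add_pow u v k

end SumSq

section NonnegOnSquares

variable {R : Type*} [CommRing R] [Algebra ℝ R]

/-- A positive functional on a real algebra: one that is nonnegative on squares. -/
def NonnegOnSquares (L : R →ₗ[ℝ] ℝ) : Prop := ∀ a, 0 ≤ L (a * a)

namespace NonnegOnSquares

variable {L : R →ₗ[ℝ] ℝ} (hL : NonnegOnSquares L)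
include hL

lemma map_nonneg {a : R} (ha : IsSumSq a) : 0 ≤ L a := by
  induction ha with
  | zero => rw [map_zero]
  | sq_add a _ ih => rw [map_add]; exact add_nonneg (hL a) ih

lemma map_le_map {a b : R} (h : IsSumSq (b - a)) : L a ≤ L b := by
  simpa only [map_sub, sub_nonneg] using hL.map_nonneg h

lemma map_pow_two_mul_nonneg (a : R) (k : ℕ) : 0 ≤ L (a ^ (2 * k)) :=
  hL.map_nonneg (isSumSq_pow_two_mul a k)

lemma two_mul_abs_map_mul_le (a b : R) : 2 * |L (a * b)| ≤ L (a ^ 2) + L (b ^ 2) := by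
  have hsub := hL.map_nonneg (isSumSq_sq (a - b))
  have hadd := hL.map_nonneg (isSumSq_sq (a + b))
  have hsub_sq : (a - b) ^ 2 = a ^ 2 + b ^ 2 - (a * b + a * b) := by ring
  have hadd_sq : (a + b) ^ 2 = a ^ 2 + b ^ 2 + (a * b + a * b) := by ring
  rw [hsub_sq, map_sub, map_add, map_add] at hsub
  rw [hadd_sq, map_add, map_add, map_add] at hadd
  have habs : |L (a * b)| ≤ (L (a ^ 2) + L (b ^ 2)) / 2 := abs_le.mpr ⟨by linarith, by linarith⟩
  linarith

lemma map_add_pow_two_mul_le (u v : R) (k : ℕ) :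
    L ((u + v) ^ (2 * k)) ≤ 4 ^ k * (L (u ^ (2 * k)) + L (v ^ (2 * k))) := by
  simpa only [map_smul, map_add, smul_eq_mul] using
    hL.map_le_map (isSumSq_four_pow_smul_sub_add_pow u v k)

lemma map_sum_pow_two_mul_le {ι : Type*} (s : Finset ι) (w : ι → R) {k : ℕ} (hk : k ≠ 0) :
    L ((∑ i ∈ s, w i) ^ (2 * k)) ≤ (4 ^ k) ^ s.card * ∑ i ∈ s, L (w i ^ (2 * k)) := by
  classical
  induction s using Finset.induction_on with
  | empty => simp [hk]
  | insert i s hi ih =>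
    have hw := hL.map_pow_two_mul_nonneg (w i) k
    have hone : (1 : ℝ) ≤ (4 ^ k) ^ s.card := one_le_pow₀ (one_le_pow₀ (by norm_num))
    rw [Finset.sum_insert hi, Finset.sum_insert hi, Finset.card_insert_of_notMem hi, pow_succ']
    calc L ((w i + ∑ j ∈ s, w j) ^ (2 * k))
        ≤ 4 ^ k * (L (w i ^ (2 * k)) + L ((∑ j ∈ s, w j) ^ (2 * k))) :=
          hL.map_add_pow_two_mul_le _ _ k
      _ ≤ 4 ^ k * ((4 ^ k) ^ s.card * L (w i ^ (2 * k)) +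
            (4 ^ k) ^ s.card * ∑ j ∈ s, L (w j ^ (2 * k))) := by
          gcongr
          exact le_mul_of_one_le_left hw hone
      _ = 4 ^ k * (4 ^ k) ^ s.card * (L (w i ^ (2 * k)) + ∑ j ∈ s, L (w j ^ (2 * k))) := by ring

end NonnegOnSquares

end NonnegOnSquares

/-! ### Rapidly decreasing power series -/

lemma factorial_mul_le_two_pow_mul (m k : ℕ) :
    (m * k).factorial ≤ 2 ^ (m * k ^ 2) * m.factorial ^ k := by
  induction k with
  | zero => simp
  | succ k ih =>
    have hexp : m * k + m + m * k ^ 2 ≤ m * (k + 1) ^ 2 := by nlinarith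
    calc (m * (k + 1)).factorial
        = (m * k + m).choose m * ((m * k).factorial * m.factorial) := by
          rw [mul_add_one, ← mul_assoc, Nat.add_choose_mul_factorial_mul_factorial]
      _ ≤ 2 ^ (m * k + m) * (2 ^ (m * k ^ 2) * m.factorial ^ k * m.factorial) := by
          gcongr
          exact Nat.choose_le_two_pow _ _
      _ = 2 ^ (m * k + m + m * k ^ 2) * m.factorial ^ (k + 1) := by ring
      _ ≤ 2 ^ (m * (k + 1) ^ 2) * m.factorial ^ (k + 1) := by gcongr; norm_num

section RapidlyDecreasing

open Finset.HasAntidiagonal (antidiagonal mem_antidiagonal)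

variable {R : Type*} [CommRing R] [Algebra ℝ R] {L : R →ₗ[ℝ] ℝ}

/-- A power series over `R` is rapidly decreasing with respect to a functional `L` when all
seminorms `a ↦ L (a ^ (2k)) ^ (1 / (2k))` of its coefficients decay faster than every geometric
sequence; the roots are cleared in the definition. -/
def IsRapidlyDecreasing (L : R →ₗ[ℝ] ℝ) (F : PowerSeries R) : Prop :=
  ∀ k : ℕ, k ≠ 0 → ∀ ρ : ℝ, 0 < ρ → ∃ K, ∀ m, ρ ^ m * L (F.coeff m ^ (2 * k)) ≤ K

lemma NonnegOnSquares.pow_mul_pow_mul_map_mul_pow_le (hL : NonnegOnSquares L) (a b : R)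
    (k j l : ℕ) (ρ : ℝ) :
    ρ ^ j * ρ ^ l * L ((a * b) ^ (2 * k)) ≤
      ((ρ ^ 2) ^ j * L (a ^ (2 * (2 * k))) + (ρ ^ 2) ^ l * L (b ^ (2 * (2 * k)))) / 2 := by
  have hamgm := hL.two_mul_abs_map_mul_le (ρ ^ j • a ^ (2 * k)) (ρ ^ l • b ^ (2 * k))
  rw [smul_mul_smul_comm, ← mul_pow, smul_pow, smul_pow, map_smul, map_smul, map_smul,
    smul_eq_mul, smul_eq_mul, smul_eq_mul, ← pow_mul, ← pow_mul, ← pow_mul, ← pow_mul,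
    mul_comm j, mul_comm l, pow_mul ρ, pow_mul ρ, mul_comm (2 * k)] at hamgm
  linarith [le_abs_self (ρ ^ j * ρ ^ l * L ((a * b) ^ (2 * k)))]

namespace IsRapidlyDecreasing

lemma coe_polynomial (L : R →ₗ[ℝ] ℝ) (p : Polynomial R) :
    IsRapidlyDecreasing L (p : PowerSeries R) := by
  intro k hk ρ _
  have hfinite : (Set.range fun m => ρ ^ m * L ((p : PowerSeries R).coeff m ^ (2 * k))).Finite := by
    refine ((p.support.finite_toSet.image fun m => ρ ^ m * L (p.coeff m ^ (2 * k))).insert 0).subset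
      ?_
    rintro _ ⟨m, rfl⟩
    by_cases hm : m ∈ p.support
    · exact Or.inr ⟨m, hm, by simp only [Polynomial.coeff_coe]⟩
    · left
      simp [Polynomial.notMem_support_iff.mp hm, hk]
  obtain ⟨K, hK⟩ := hfinite.bddAbove
  exact ⟨K, fun m => hK ⟨m, rfl⟩⟩

variable {F G : PowerSeries R}

lemma add (hL : NonnegOnSquares L) (hF : IsRapidlyDecreasing L F) (hG : IsRapidlyDecreasing L G) :
    IsRapidlyDecreasing L (F + G) := by
  intro k hk ρ hρ
  obtain ⟨K₁, hK₁⟩ := hF k hk ρ hρ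
  obtain ⟨K₂, hK₂⟩ := hG k hk ρ hρ
  refine ⟨4 ^ k * (K₁ + K₂), fun m => ?_⟩
  calc ρ ^ m * L ((F + G).coeff m ^ (2 * k))
      ≤ ρ ^ m * (4 ^ k * (L (F.coeff m ^ (2 * k)) + L (G.coeff m ^ (2 * k)))) := by
        rw [map_add]
        gcongr
        exact hL.map_add_pow_two_mul_le _ _ k
    _ = 4 ^ k * (ρ ^ m * L (F.coeff m ^ (2 * k)) + ρ ^ m * L (G.coeff m ^ (2 * k))) := by ring
    _ ≤ 4 ^ k * (K₁ + K₂) := by gcongr <;> apply_assumption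

lemma exists_pow_mul_map_coeff_mul_coeff_pow_le (hL : NonnegOnSquares L)
    (hF : IsRapidlyDecreasing L F) (hG : IsRapidlyDecreasing L G) {k : ℕ} (hk : k ≠ 0) {ρ : ℝ}
    (hρ : 0 < ρ) :
    ∃ K, ∀ j l, ρ ^ j * ρ ^ l * L ((F.coeff j * G.coeff l) ^ (2 * k)) ≤ K := by
  obtain ⟨K₁, hK₁⟩ := hF (2 * k) (by positivity) (ρ ^ 2) (by positivity)
  obtain ⟨K₂, hK₂⟩ := hG (2 * k) (by positivity) (ρ ^ 2) (by positivity)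
  refine ⟨(K₁ + K₂) / 2, fun j l => ?_⟩
  linarith [hL.pow_mul_pow_mul_map_mul_pow_le (F.coeff j) (G.coeff l) k j l ρ, hK₁ j, hK₂ l]

lemma mul (hL : NonnegOnSquares L) (hF : IsRapidlyDecreasing L F) (hG : IsRapidlyDecreasing L G) :
    IsRapidlyDecreasing L (F * G) := by
  intro k hk ρ hρ
  set τ : ℝ := 2 * 4 ^ k * ρ with hτ
  obtain ⟨K, hK⟩ :=
    hF.exists_pow_mul_map_coeff_mul_coeff_pow_le hL hG hk (by positivity : 0 < τ)
  have hK_nonneg : 0 ≤ K :=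
    (hL.map_pow_two_mul_nonneg _ k).trans (by simpa using hK 0 0)
  refine ⟨4 ^ k * K, fun m => ?_⟩
  have hcard : ((m + 1 : ℕ) : ℝ) ≤ 2 ^ m := mod_cast Nat.lt_two_pow_self
  have hmul : 2 ^ m * (ρ ^ m * L ((F * G).coeff m ^ (2 * k))) ≤
      2 ^ m * (4 ^ k * K) := calc
    2 ^ m * (ρ ^ m * L ((F * G).coeff m ^ (2 * k)))
      ≤ 2 ^ m * (ρ ^ m * ((4 ^ k) ^ (m + 1) *
          ∑ p ∈ antidiagonal m, L ((F.coeff p.1 * G.coeff p.2) ^ (2 * k)))) := by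
        rw [PowerSeries.coeff_mul, ← Finset.Nat.card_antidiagonal m]
        gcongr
        exact hL.map_sum_pow_two_mul_le _ _ hk
    _ = 4 ^ k * ∑ p ∈ antidiagonal m,
          τ ^ m * L ((F.coeff p.1 * G.coeff p.2) ^ (2 * k)) := by
        rw [← Finset.mul_sum, hτ]
        ring
    _ ≤ 4 ^ k * ((m + 1 : ℕ) • K) := by
        gcongr
        rw [← Finset.Nat.card_antidiagonal m]
        exact Finset.sum_le_card_nsmul _ _ _ fun p hp => by
          rw [← mem_antidiagonal.mp hp, pow_add]
          exact hK p.1 p.2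
    _ ≤ 4 ^ k * (2 ^ m * K) := by
        rw [nsmul_eq_mul]
        gcongr
    _ = 2 ^ m * (4 ^ k * K) := by ring
  exact le_of_mul_le_mul_left hmul (by positivity)

end IsRapidlyDecreasing

/-- The rapidly decreasing power series as a subalgebra of `R⟦X⟧`. -/
def rapidlyDecreasing (hL : NonnegOnSquares L) : Subalgebra ℝ (PowerSeries R) where
  carrier := {F | IsRapidlyDecreasing L F}
  add_mem' hF hG := hF.add hL hG
  mul_mem' hF hG := hF.mul hL hG
  algebraMap_mem' c := by
    rw [Set.mem_ofPred_eq, PowerSeries.algebraMap_apply, ← Polynomial.coe_C]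
    exact IsRapidlyDecreasing.coe_polynomial L _

/-- The ring homomorphism `F(t) ↦ F(u t)` from real power series to power series over `R`. -/
noncomputable def substScaled (u : R) : PowerSeries ℝ →+* PowerSeries R :=
  (PowerSeries.rescale u).comp (PowerSeries.map (algebraMap ℝ R))

lemma coeff_substScaled (u : R) (F : PowerSeries ℝ) (m : ℕ) :
    (substScaled u F).coeff m = F.coeff m • u ^ m := by
  rw [substScaled, RingHom.comp_apply, PowerSeries.coeff_rescale, PowerSeries.coeff_map,
    Algebra.smul_def, mul_comm]

lemma isRapidlyDecreasing_substScaled (hL : NonnegOnSquares L) {u : R} {c : ℝ}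
    (hu : ∀ k : ℕ, L (u ^ (2 * k)) ≤ c * k.factorial) {F : PowerSeries ℝ}
    (hF : ∀ m, |F.coeff m| ≤ 1 / m.factorial) :
    IsRapidlyDecreasing L (substScaled u F) := by
  intro k hk ρ hρ
  have hc : 0 ≤ c := by
    simpa using (hL.map_pow_two_mul_nonneg u 0).trans (hu 0)
  refine ⟨c * Real.exp (ρ * 2 ^ k ^ 2), fun m => ?_⟩
  have hm : (1 : ℝ) ≤ m.factorial := mod_cast m.factorial_pos
  have hfactorial : ((m * k).factorial : ℝ) ≤ 2 ^ (m * k ^ 2) * m.factorial ^ k :=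
    mod_cast factorial_mul_le_two_pow_mul m k
  calc ρ ^ m * L ((substScaled u F).coeff m ^ (2 * k))
      = ρ ^ m * (|F.coeff m| ^ (2 * k) * L (u ^ (2 * (m * k)))) := by
        rw [coeff_substScaled, smul_pow, map_smul, smul_eq_mul, ← pow_mul,
          (even_two_mul k).pow_abs, mul_left_comm m]
    _ ≤ ρ ^ m * ((1 / m.factorial) ^ (2 * k) * (c * (2 ^ (m * k ^ 2) * m.factorial ^ k))) := by
        have hmap := hL.map_pow_two_mul_nonneg u (m * k)
        gcongr
        · exact hF m
        · exact (hu _).trans (mul_le_mul_of_nonneg_left hfactorial hc)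
    _ = c * ((ρ * 2 ^ k ^ 2) ^ m / m.factorial ^ k) := by
        rw [div_pow, one_pow, two_mul, pow_add, mul_pow, ← pow_mul, mul_comm (k ^ 2)]
        field_simp
    _ ≤ c * ((ρ * 2 ^ k ^ 2) ^ m / m.factorial) := by
        gcongr
        exact le_self_pow₀ hm hk
    _ ≤ c * Real.exp (ρ * 2 ^ k ^ 2) := by
        gcongr
        exact Real.pow_div_factorial_le_exp _ (by positivity) m

end RapidlyDecreasing

/-! ### Sine and cosine as power series -/

section Sine

variable (A : Type*) [CommRing A] [Algebra ℚ A]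

lemma derivative_sin : PowerSeries.derivative A (PowerSeries.sin A) = PowerSeries.cos A := by
  ext m
  rw [PowerSeries.coeff_derivative, PowerSeries.sin, PowerSeries.cos, PowerSeries.coeff_mk,
    PowerSeries.coeff_mk]
  by_cases hm : Even m
  · have hhalf : (m + 1) / 2 = m / 2 := by
      obtain ⟨l, rfl⟩ := hm
      lia
    have hfactorial : (m.factorial : ℚ) ≠ 0 := mod_cast m.factorial_ne_zero
    rw [if_neg (not_not.mpr hm <| Nat.even_add_one.mp ·), if_pos hm, hhalf, ← Nat.cast_add_one,
      ← map_natCast (algebraMap ℚ A), ← map_mul, Nat.factorial_succ]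
    congr 1
    push_cast
    field_simp
  · rw [if_pos (Nat.even_add_one.mpr hm), if_neg hm, zero_mul]

lemma derivative_cos : PowerSeries.derivative A (PowerSeries.cos A) = -PowerSeries.sin A := by
  ext m
  rw [PowerSeries.coeff_derivative, map_neg, PowerSeries.sin, PowerSeries.cos,
    PowerSeries.coeff_mk, PowerSeries.coeff_mk]
  by_cases hm : Even m
  · rw [if_neg (not_not.mpr hm <| Nat.even_add_one.mp ·), if_pos hm, zero_mul, neg_zero]
  · have hhalf : (m + 1) / 2 = m / 2 + 1 := by
      obtain ⟨l, rfl⟩ := Nat.not_even_iff_odd.mp hm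
      lia
    have hfactorial : (m.factorial : ℚ) ≠ 0 := mod_cast m.factorial_ne_zero
    rw [if_pos (Nat.even_add_one.mpr hm), if_neg hm, hhalf, ← Nat.cast_add_one,
      ← map_natCast (algebraMap ℚ A), ← map_mul, ← map_neg, Nat.factorial_succ]
    congr 1
    push_cast
    field_simp
    ring

lemma constantCoeff_sin : (PowerSeries.sin A).constantCoeff = 0 := by
  rw [← PowerSeries.coeff_zero_eq_constantCoeff_apply, PowerSeries.sin, PowerSeries.coeff_mk]
  exact if_pos Even.zero

lemma constantCoeff_cos : (PowerSeries.cos A).constantCoeff = 1 := by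
  rw [← PowerSeries.coeff_zero_eq_constantCoeff_apply, PowerSeries.cos, PowerSeries.coeff_mk]
  simp

lemma sin_sq_add_cos_sq_powerSeries [IsAddTorsionFree A] :
    PowerSeries.sin A ^ 2 + PowerSeries.cos A ^ 2 = 1 := by
  refine PowerSeries.derivative.ext ?_ ?_
  · rw [map_add, PowerSeries.derivative_pow, PowerSeries.derivative_pow, derivative_sin,
      derivative_cos, PowerSeries.derivative_one]
    push_cast
    ring
  · rw [map_add, map_pow, map_pow, constantCoeff_sin, constantCoeff_cos, map_one]
    ring

lemma abs_coeff_sin_le (m : ℕ) : |(PowerSeries.sin ℝ).coeff m| ≤ 1 / m.factorial := by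
  rw [PowerSeries.sin, PowerSeries.coeff_mk]
  split_ifs
  · rw [abs_zero]
    positivity
  · simp [abs_div]

lemma abs_coeff_cos_le (m : ℕ) : |(PowerSeries.cos ℝ).coeff m| ≤ 1 / m.factorial := by
  rw [PowerSeries.cos, PowerSeries.coeff_mk]
  split_ifs
  · simp [abs_div]
  · rw [abs_zero]
    positivity

/-- The power series of `sin t / t`. -/
noncomputable def sincSeries : PowerSeries ℝ :=
  .mk fun m => (PowerSeries.sin ℝ).coeff (m + 1)

lemma sincSeries_mul_X : sincSeries * PowerSeries.X = PowerSeries.sin ℝ := by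
  conv_rhs => rw [PowerSeries.eq_shift_mul_X_add_const (PowerSeries.sin ℝ), constantCoeff_sin,
    map_zero, add_zero]
  rfl

lemma constantCoeff_sincSeries : sincSeries.constantCoeff = 1 := by
  rw [← PowerSeries.coeff_zero_eq_constantCoeff_apply, sincSeries, PowerSeries.coeff_mk,
    PowerSeries.sin, PowerSeries.coeff_mk]
  simp

lemma abs_coeff_sincSeries_le (m : ℕ) : |sincSeries.coeff m| ≤ 1 / m.factorial := by
  rw [sincSeries, PowerSeries.coeff_mk]
  refine (abs_coeff_sin_le (m + 1)).trans ?_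
  gcongr
  exact m.le_succ

end Sine

/-! ### Evaluation of rapidly decreasing series -/

section EvalFunctional

open Finset.HasAntidiagonal (antidiagonal mem_antidiagonal sigmaAntidiagonalEquivProd)

variable {R : Type*} [CommRing R] [Algebra ℝ R] {L : R →ₗ[ℝ] ℝ} {F G : PowerSeries R}

namespace IsRapidlyDecreasing

lemma exists_pow_mul_abs_map_coeff_mul_coeff_le (hL : NonnegOnSquares L)
    (hF : IsRapidlyDecreasing L F) (hG : IsRapidlyDecreasing L G) {ρ : ℝ} (hρ : 0 < ρ) :
    ∃ K, ∀ j l, ρ ^ j * ρ ^ l * |L (F.coeff j * G.coeff l)| ≤ K := by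
  obtain ⟨K₁, hK₁⟩ := hF 1 one_ne_zero (ρ ^ 2) (by positivity)
  obtain ⟨K₂, hK₂⟩ := hG 1 one_ne_zero (ρ ^ 2) (by positivity)
  refine ⟨(K₁ + K₂) / 2, fun j l => ?_⟩
  have hamgm := hL.two_mul_abs_map_mul_le (ρ ^ j • F.coeff j) (ρ ^ l • G.coeff l)
  rw [smul_mul_smul_comm, smul_pow, smul_pow, map_smul, map_smul, map_smul, smul_eq_mul,
    smul_eq_mul, smul_eq_mul, abs_mul, abs_of_pos (by positivity), pow_right_comm,
    pow_right_comm ρ l] at hamgm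
  linarith [hK₁ j, hK₂ l]

lemma exists_norm_pow_mul_map_coeff_mul_coeff_le (hL : NonnegOnSquares L)
    (hF : IsRapidlyDecreasing L F) (hG : IsRapidlyDecreasing L G) {B : ℝ} (hB : 0 < B) :
    ∃ K, ∀ δ, |δ| ≤ B → ∀ j l,
      ‖δ ^ (j + l) * L (F.coeff j * G.coeff l)‖ ≤ K * ((1 / 2) ^ j * (1 / 2) ^ l) := by
  obtain ⟨K, hK⟩ := hF.exists_pow_mul_abs_map_coeff_mul_coeff_le hL hG (mul_pos two_pos hB)
  refine ⟨K, fun δ hδ j l => ?_⟩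
  calc ‖δ ^ (j + l) * L (F.coeff j * G.coeff l)‖
      = |δ| ^ (j + l) * |L (F.coeff j * G.coeff l)| := by
        rw [Real.norm_eq_abs, abs_mul, abs_pow]
    _ ≤ B ^ (j + l) * |L (F.coeff j * G.coeff l)| := by gcongr
    _ = (2 * B) ^ j * (2 * B) ^ l * |L (F.coeff j * G.coeff l)| * ((1 / 2) ^ j * (1 / 2) ^ l) := by
        simp only [mul_pow, one_div, inv_pow]
        field_simp
        ring
    _ ≤ K * ((1 / 2) ^ j * (1 / 2) ^ l) := by
        gcongr
        exact hK j l

lemma exists_norm_pow_mul_map_coeff_le (hL : NonnegOnSquares L) (hF : IsRapidlyDecreasing L F)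
    {B : ℝ} (hB : 0 < B) :
    ∃ K, ∀ δ, |δ| ≤ B → ∀ m, ‖δ ^ m * L (F.coeff m)‖ ≤ K * (1 / 2) ^ m := by
  obtain ⟨K, hK⟩ := hF.exists_norm_pow_mul_map_coeff_mul_coeff_le hL (coe_polynomial L 1) hB
  exact ⟨K, fun δ hδ m => by simpa using hK δ hδ m 0⟩

lemma summable (hL : NonnegOnSquares L) (hF : IsRapidlyDecreasing L F) (δ : ℝ) :
    Summable fun m => δ ^ m * L (F.coeff m) := by
  obtain ⟨K, hK⟩ := hF.exists_norm_pow_mul_map_coeff_le hL (B := |δ| + 1) (by positivity)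
  exact .of_norm_bounded (summable_geometric_two.mul_left K) (hK δ (by linarith))

lemma summable_coeff_mul_coeff (hL : NonnegOnSquares L) (hF : IsRapidlyDecreasing L F)
    (hG : IsRapidlyDecreasing L G) (δ : ℝ) :
    Summable fun p : ℕ × ℕ => δ ^ (p.1 + p.2) * L (F.coeff p.1 * G.coeff p.2) := by
  obtain ⟨K, hK⟩ := hF.exists_norm_pow_mul_map_coeff_mul_coeff_le hL hG (B := |δ| + 1)
    (by positivity)
  have hgeometric := summable_geometric_two.mul_of_nonneg summable_geometric_two
    (fun m => by positivity) fun m => by positivity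
  exact .of_norm_bounded (hgeometric.mul_left K) fun p => hK δ (by linarith) p.1 p.2

lemma hasSum_coeff_mul (hL : NonnegOnSquares L) (hF : IsRapidlyDecreasing L F)
    (hG : IsRapidlyDecreasing L G) (δ : ℝ) :
    HasSum (fun m => δ ^ m * L ((F * G).coeff m))
      (∑' p : ℕ × ℕ, δ ^ (p.1 + p.2) * L (F.coeff p.1 * G.coeff p.2)) := by
  have hsum := (hF.summable_coeff_mul_coeff hL hG δ).hasSum
  refine (sigmaAntidiagonalEquivProd.hasSum_iff.mpr hsum).sigma fun m => ?_
  suffices hfiber : δ ^ m * L ((F * G).coeff m) = ∑ p : antidiagonal m,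
      δ ^ (p.1.1 + p.1.2) * L (F.coeff p.1.1 * G.coeff p.1.2) from hfiber ▸ hasSum_fintype _
  rw [PowerSeries.coeff_mul, map_sum, Finset.mul_sum, ← Finset.sum_coe_sort]
  refine Finset.sum_congr rfl fun p _ => ?_
  simp [← mem_antidiagonal.mp p.2]

lemma tsum_mul_self_nonneg (hL : NonnegOnSquares L) (hF : IsRapidlyDecreasing L F) (δ : ℝ) :
    0 ≤ ∑' m, δ ^ m * L ((F * F).coeff m) := by
  have hsum := (hF.summable_coeff_mul_coeff hL hF δ).hasSum
  have hsquares (M : ℕ) :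
      ∑ p ∈ Finset.range M ×ˢ Finset.range M, δ ^ (p.1 + p.2) * L (F.coeff p.1 * F.coeff p.2) =
        L ((∑ j ∈ Finset.range M, δ ^ j • F.coeff j) *
          ∑ j ∈ Finset.range M, δ ^ j • F.coeff j) := by
    rw [Finset.sum_mul_sum, map_sum, Finset.sum_product]
    refine Finset.sum_congr rfl fun j _ => ?_
    rw [map_sum]
    refine Finset.sum_congr rfl fun l _ => ?_
    rw [smul_mul_smul_comm, map_smul, smul_eq_mul, pow_add]
  rw [(hF.hasSum_coeff_mul hL hF δ).tsum_eq]
  have hboxes : Tendsto (fun M => (Finset.range M, Finset.range M)) atTop atTop := by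
    rw [← prod_atTop_atTop_eq]
    exact tendsto_finset_range.prodMk tendsto_finset_range
  refine ge_of_tendsto' (hsum.comp (tendsto_finsetProd_atTop.comp hboxes)) fun M => ?_
  exact (hL _).trans_eq (hsquares M).symm

end IsRapidlyDecreasing

/-- The functional `F(t) ↦ L (F(δ))` on rapidly decreasing power series, where `L` is applied
coefficientwise so that only a real series has to converge. -/
noncomputable def evalFunctional (hL : NonnegOnSquares L) (δ : ℝ) :
    rapidlyDecreasing hL →ₗ[ℝ] ℝ where
  toFun F := ∑' m, δ ^ m * L (F.1.coeff m)
  map_add' F G := by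
    rw [← (F.2.summable hL δ).tsum_add (G.2.summable hL δ)]
    simp only [Subalgebra.coe_add, map_add, mul_add]
  map_smul' c F := by
    simp only [Subalgebra.coe_smul, PowerSeries.coeff_smul, map_smul, smul_eq_mul,
      mul_left_comm _ c, tsum_mul_left, RingHom.id_apply]

lemma evalFunctional_apply (hL : NonnegOnSquares L) (δ : ℝ) (F : rapidlyDecreasing hL) :
    evalFunctional hL δ F = ∑' m, δ ^ m * L (F.1.coeff m) := rfl

lemma nonnegOnSquares_evalFunctional (hL : NonnegOnSquares L) (δ : ℝ) :
    NonnegOnSquares (evalFunctional hL δ) :=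
  fun F => F.2.tsum_mul_self_nonneg hL δ

lemma tendsto_evalFunctional_zero (hL : NonnegOnSquares L) (F : rapidlyDecreasing hL) :
    Tendsto (fun δ => evalFunctional hL δ F) (𝓝[≠] 0) (𝓝 (L F.1.constantCoeff)) := by
  obtain ⟨K, hK⟩ := F.2.exists_norm_pow_mul_map_coeff_le hL one_pos
  have hsmall : ∀ᶠ δ : ℝ in 𝓝 0, |δ| ≤ 1 :=
    (continuous_abs.tendsto' 0 0 abs_zero).eventually_le_const one_pos
  have hlim := tendsto_tsum_of_dominated_convergence (𝓕 := 𝓝 (0 : ℝ))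
    (f := fun δ m => δ ^ m * L (F.1.coeff m)) (g := fun m => 0 ^ m * L (F.1.coeff m))
    (summable_geometric_two.mul_left K)
    (fun m => ((continuous_pow m).mul_const _).tendsto 0) (hsmall.mono hK)
  rw [tsum_eq_single 0 fun m hm => by rw [zero_pow hm, zero_mul], pow_zero, one_mul,
    PowerSeries.coeff_zero_eq_constantCoeff_apply] at hlim
  exact hlim.mono_left nhdsWithin_le_nhds

/-- The power series variable as a rapidly decreasing series. -/
noncomputable def rapidlyDecreasing.X (hL : NonnegOnSquares L) : rapidlyDecreasing hL :=
  ⟨PowerSeries.X, by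
    rw [← Polynomial.coe_X]
    exact IsRapidlyDecreasing.coe_polynomial L _⟩

lemma evalFunctional_X_mul (hL : NonnegOnSquares L) (δ : ℝ) (F : rapidlyDecreasing hL) :
    evalFunctional hL δ (rapidlyDecreasing.X hL * F) = δ * evalFunctional hL δ F := by
  have hsummable := (rapidlyDecreasing.X hL * F).2.summable hL δ
  rw [evalFunctional_apply, evalFunctional_apply, hsummable.tsum_eq_zero_add, ← tsum_mul_left]
  have hcoeff (m : ℕ) : (rapidlyDecreasing.X hL * F).1.coeff (m + 1) = F.1.coeff m :=
    PowerSeries.coeff_succ_X_mul m F.1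
  have hzero : (rapidlyDecreasing.X hL * F).1.coeff 0 = 0 := PowerSeries.coeff_zero_X_mul F.1
  simp only [hcoeff, hzero, map_zero, mul_zero, zero_add, pow_succ', mul_assoc]

end EvalFunctional

/-! ### Bernstein approximation and positivity on the cube -/

section Bernstein

lemma bernsteinPolynomial_succ_succ_mul (R : Type*) [CommRing R] (N k : ℕ) :
    ((k + 1 : ℕ) : Polynomial R) * bernsteinPolynomial R (N + 1) (k + 1) =
      ((N + 1 : ℕ) : Polynomial R) * (Polynomial.X * bernsteinPolynomial R N k) := by
  have hchoose : ((N + 1 : ℕ) : Polynomial R) * (N.choose k : Polynomial R) =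
      ((N + 1).choose (k + 1) : Polynomial R) * ((k + 1 : ℕ) : Polynomial R) :=
    mod_cast congrArg (Nat.cast (R := Polynomial R)) (Nat.add_one_mul_choose_eq N k)
  rw [bernsteinPolynomial, bernsteinPolynomial, Nat.add_sub_add_right]
  linear_combination
    -(Polynomial.X ^ (k + 1) * (1 - Polynomial.X : Polynomial R) ^ (N - k)) * hchoose

lemma sum_descFactorial_mul_bernsteinPolynomial (R : Type*) [CommRing R] (N m : ℕ) :
    ∑ k ∈ Finset.range (N + 1), (k.descFactorial m : Polynomial R) * bernsteinPolynomial R N k =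
      (N.descFactorial m : Polynomial R) * Polynomial.X ^ m := by
  induction m generalizing N with
  | zero => simpa using bernsteinPolynomial.sum R N
  | succ m ih =>
    cases N with
    | zero => simp
    | succ N =>
      have hterm (k : ℕ) : ((k + 1).descFactorial (m + 1) : Polynomial R) *
          bernsteinPolynomial R (N + 1) (k + 1) = ((N + 1 : ℕ) : Polynomial R) *
            (Polynomial.X * ((k.descFactorial m : Polynomial R) * bernsteinPolynomial R N k)) := by
        rw [Nat.succ_descFactorial_succ, Nat.cast_mul]
        linear_combination
          (k.descFactorial m : Polynomial R) * bernsteinPolynomial_succ_succ_mul R N k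
      rw [Finset.sum_range_succ', Finset.sum_congr rfl fun k _ => hterm k, ← Finset.mul_sum,
        ← Finset.mul_sum, ih, Nat.succ_descFactorial_succ]
      push_cast
      simp only [Nat.zero_descFactorial_succ]
      push_cast
      ring

lemma cast_descFactorial_succ_eq_sub_mul (n m : ℕ) :
    (n.descFactorial (m + 1) : ℝ) = ((n : ℝ) - m) * n.descFactorial m := by
  rw [Nat.descFactorial_succ, Nat.cast_mul]
  rcases le_or_gt m n with h | h
  · rw [Nat.cast_sub h]
  · rw [Nat.descFactorial_of_lt h, Nat.cast_zero, mul_zero, mul_zero]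

variable {A : Type*} [CommRing A] [Algebra ℝ A]

lemma isSumSq_aeval_bernsteinPolynomial {y : A} (hy : IsSumSq y) (hy' : IsSumSq (1 - y))
    (N k : ℕ) : IsSumSq (Polynomial.aeval y (bernsteinPolynomial ℝ N k)) := by
  simp only [bernsteinPolynomial, map_mul, map_pow, map_sub, map_one, map_natCast,
    Polynomial.aeval_X]
  exact ((IsSumSq.natCast _).mul (isSumSq_pow hy k)).mul (isSumSq_pow hy' _)

lemma descFactorial_div_pow_eq_prod {N : ℕ} (hN : N ≠ 0) (m : ℕ) :
    (N.descFactorial m : ℝ) / (N : ℝ) ^ m = ∏ i ∈ Finset.range m, (1 - (i : ℝ) * (1 / N)) := by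
  have hN' : (N : ℝ) ≠ 0 := Nat.cast_ne_zero.mpr hN
  induction m with
  | zero => simp
  | succ m ih =>
    rw [Finset.prod_range_succ, ← ih, cast_descFactorial_succ_eq_sub_mul]
    field_simp
    ring

/-- The Bernstein operator of order `N` at a point `y` of a real algebra: it sends samples `φ k`,
thought of as values at the nodes `k / N`, to `∑ₖ φ k • B_{N,k}(y)`. -/
noncomputable def bernsteinOperator (y : A) (N : ℕ) : (ℕ → ℝ) →ₗ[ℝ] A :=
  ∑ k ∈ Finset.range (N + 1),
    (LinearMap.proj k).smulRight (Polynomial.aeval y (bernsteinPolynomial ℝ N k))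

lemma bernsteinOperator_apply (y : A) (N : ℕ) (φ : ℕ → ℝ) :
    bernsteinOperator y N φ =
      ∑ k ∈ Finset.range (N + 1), φ k • Polynomial.aeval y (bernsteinPolynomial ℝ N k) := by
  simp only [bernsteinOperator, LinearMap.sum_apply, LinearMap.smulRight_apply,
    LinearMap.proj_apply]

lemma bernsteinOperator_descFactorial (y : A) (N m : ℕ) :
    bernsteinOperator y N (fun k => (k.descFactorial m : ℝ)) = (N.descFactorial m : ℝ) • y ^ m := by
  have h := congrArg (Polynomial.aeval y) (sum_descFactorial_mul_bernsteinPolynomial ℝ N m)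
  simpa only [map_sum, map_mul, map_pow, map_natCast, Polynomial.aeval_X, bernsteinOperator_apply,
    Nat.cast_smul_eq_nsmul, nsmul_eq_mul] using h

/-- Mixing in falling factorials makes the induction on `j` close up, through
 `k * k.descFactorial m = k.descFactorial (m + 1) + m * k.descFactorial m`. -/
lemma exists_polynomial_eval_eq_bernsteinOperator (y : A) (j m : ℕ) :
    ∃ P : Polynomial A, P.eval 0 = y ^ (j + m) ∧ ∀ N : ℕ, N ≠ 0 →
      P.eval (algebraMap ℝ A (1 / N)) =
        bernsteinOperator y N fun k => ((k : ℝ) / N) ^ j * (k.descFactorial m / (N : ℝ) ^ m) := by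
  induction j generalizing m with
  | zero =>
    refine ⟨(∏ i ∈ Finset.range m, (1 - (i : Polynomial A) * Polynomial.X)) *
      Polynomial.C (y ^ m), by simp [Polynomial.eval_prod], fun N hN => ?_⟩
    have hfun : (fun k : ℕ => ((k : ℝ) / N) ^ 0 * (k.descFactorial m / (N : ℝ) ^ m)) =
        (1 / (N : ℝ) ^ m) • fun k : ℕ => (k.descFactorial m : ℝ) := by
      ext k
      rw [Pi.smul_apply, smul_eq_mul]
      ring
    rw [hfun, map_smul, bernsteinOperator_descFactorial, smul_smul, one_div_mul_eq_div,
      descFactorial_div_pow_eq_prod hN, Algebra.smul_def]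
    simp [Polynomial.eval_prod]
  | succ j ih =>
    obtain ⟨P, hP₀, hP⟩ := ih (m + 1)
    obtain ⟨Q, _, hQ⟩ := ih m
    refine ⟨P + (m : Polynomial A) * Polynomial.X * Q, ?_, fun N hN => ?_⟩
    · simp [hP₀, add_right_comm, add_assoc]
    · have hN' : (N : ℝ) ≠ 0 := Nat.cast_ne_zero.mpr hN
      have hfun : (fun k : ℕ => ((k : ℝ) / N) ^ (j + 1) * (k.descFactorial m / (N : ℝ) ^ m)) =
          (fun k : ℕ => ((k : ℝ) / N) ^ j * (k.descFactorial (m + 1) / (N : ℝ) ^ (m + 1))) +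
            ((m : ℝ) * (1 / N)) •
              fun k : ℕ => ((k : ℝ) / N) ^ j * (k.descFactorial m / (N : ℝ) ^ m) := by
        ext k
        rw [Pi.add_apply, Pi.smul_apply, smul_eq_mul, cast_descFactorial_succ_eq_sub_mul, pow_succ,
          pow_succ]
        field_simp
        ring
      rw [hfun, map_add, map_smul, ← hP N hN, ← hQ N hN, Algebra.smul_def, map_mul, map_natCast]
      simp

variable {ι : Type*}

lemma prod_bernsteinOperator [Fintype ι] [DecidableEq ι] (y : ι → A) (N : ℕ) (φ : ι → ℕ → ℝ) :
    ∏ i, bernsteinOperator (y i) N (φ i) = ∑ k ∈ Fintype.piFinset fun _ => Finset.range (N + 1),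
      (∏ i, φ i (k i)) • ∏ i, Polynomial.aeval (y i) (bernsteinPolynomial ℝ N (k i)) := by
  simp only [bernsteinOperator_apply, Finset.prod_univ_sum, Finset.prod_smul]

lemma exists_polynomial_eval_eq_sum_bernstein [Fintype ι] [DecidableEq ι] (y : ι → A)
    (q : MvPolynomial ι ℝ) :
    ∃ P : Polynomial A, P.eval 0 = aeval y q ∧ ∀ N : ℕ, N ≠ 0 →
      P.eval (algebraMap ℝ A (1 / N)) = ∑ k ∈ Fintype.piFinset fun _ => Finset.range (N + 1),
        eval (fun i => (k i : ℝ) / N) q •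
          ∏ i, Polynomial.aeval (y i) (bernsteinPolynomial ℝ N (k i)) := by
  induction q using MvPolynomial.induction_on' with
  | monomial α c =>
    choose P hP₀ hP using fun i => exists_polynomial_eval_eq_bernsteinOperator (y i) (α i) 0
    refine ⟨c • ∏ i, P i, ?_, fun N hN => ?_⟩
    · simp [Polynomial.eval_prod, hP₀, aeval_monomial, Finsupp.prod_fintype, Algebra.smul_def]
    · simp only [Polynomial.eval_smul, Polynomial.eval_prod, hP _ N hN, prod_bernsteinOperator,
        Finset.smul_sum, smul_smul, eval_monomial, Nat.descFactorial_zero, pow_zero, Nat.cast_one,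
        div_one, mul_one]
      simp only [Finsupp.prod_fintype, pow_zero, implies_true]
  | add q₁ q₂ ih₁ ih₂ =>
    obtain ⟨P₁, hP₁₀, hP₁⟩ := ih₁
    obtain ⟨P₂, hP₂₀, hP₂⟩ := ih₂
    refine ⟨P₁ + P₂, by rw [Polynomial.eval_add, hP₁₀, hP₂₀, map_add], fun N hN => ?_⟩
    simp only [Polynomial.eval_add, hP₁ N hN, hP₂ N hN, map_add, add_smul, Finset.sum_add_distrib]

lemma continuous_map_eval_algebraMap (Λ : A →ₗ[ℝ] ℝ) (P : Polynomial A) :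
    Continuous fun t : ℝ => Λ (P.eval (algebraMap ℝ A t)) := by
  have hsum (t : ℝ) : Λ (P.eval (algebraMap ℝ A t)) =
      ∑ d ∈ Finset.range (P.natDegree + 1), t ^ d * Λ (P.coeff d) := by
    simp only [Polynomial.eval_eq_sum_range, map_sum, ← map_pow, mul_comm (P.coeff _),
      ← Algebra.smul_def, map_smul, smul_eq_mul]
  simp only [hsum]
  fun_prop

lemma NonnegOnSquares.map_aeval_nonneg_of_nonneg_on_unit_cube [Finite ι] {Λ : A →ₗ[ℝ] ℝ}
    (hΛ : NonnegOnSquares Λ) {y : ι → A} (hy : ∀ i, IsSumSq (y i)) (hy' : ∀ i, IsSumSq (1 - y i))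
    {q : MvPolynomial ι ℝ} (hq : ∀ x : ι → ℝ, (∀ i, x i ∈ Set.Icc 0 1) → 0 ≤ eval x q) :
    0 ≤ Λ (aeval y q) := by
  classical
  cases nonempty_fintype ι
  obtain ⟨P, hP₀, hP⟩ := exists_polynomial_eval_eq_sum_bernstein y q
  have hlim : Tendsto (fun N : ℕ => Λ (P.eval (algebraMap ℝ A (1 / N)))) atTop
      (𝓝 (Λ (aeval y q))) := by
    rw [← hP₀, ← map_zero (algebraMap ℝ A)]
    exact ((continuous_map_eval_algebraMap Λ P).tendsto 0).comp tendsto_one_div_atTop_nhds_zero_nat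
  refine ge_of_tendsto hlim ((eventually_ne_atTop 0).mono fun N hN => ?_)
  rw [hP N hN]
  refine hΛ.map_nonneg <| IsSumSq.sum fun k hk => isSumSq_smul (hq _ fun i => ?_) <|
    IsSumSq.prod fun i _ => isSumSq_aeval_bernsteinPolynomial (hy i) (hy' i) N (k i)
  have hki : k i ≤ N := Nat.lt_succ_iff.mp (Finset.mem_range.mp (Fintype.mem_piFinset.mp hk i))
  exact ⟨by positivity, div_le_one_of_le₀ (mod_cast hki) N.cast_nonneg⟩

lemma isSumSq_half_smul_one_add {a : A} (ha : IsSumSq (1 - a ^ 2)) :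
    IsSumSq ((1 / 2 : ℝ) • (1 + a)) := by
  have hring : (1 + a) ^ 2 + (1 - a ^ 2) = (2 : ℝ) • (1 + a) := by
    rw [Algebra.smul_def, map_ofNat]
    ring
  have hsplit : (1 / 2 : ℝ) • (1 + a) = (1 / 4 : ℝ) • ((1 + a) ^ 2 + (1 - a ^ 2)) := by
    rw [hring, smul_smul]
    norm_num
  rw [hsplit]
  exact isSumSq_smul (by norm_num) ((isSumSq_sq _).add ha)

lemma NonnegOnSquares.map_aeval_nonneg_of_nonneg_on_cube [Finite ι] {Λ : A →ₗ[ℝ] ℝ}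
    (hΛ : NonnegOnSquares Λ) {s : ι → A} (hs : ∀ i, IsSumSq (1 - s i ^ 2)) {q : MvPolynomial ι ℝ}
    (hq : ∀ x : ι → ℝ, (∀ i, x i ∈ Set.Icc (-1) 1) → 0 ≤ eval x q) :
    0 ≤ Λ (aeval s q) := by
  have hcompl (i : ι) : 1 - (1 / 2 : ℝ) • (1 + s i) = (1 / 2 : ℝ) • (1 + -s i) := by
    module
  have hsubst : aeval (fun i => (1 / 2 : ℝ) • (1 + s i)) (bind₁ (fun i => C 2 * X i - 1) q) =
      aeval s q := by
    rw [aeval_bind₁]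
    congr 2 with i
    simp only [map_sub, map_mul, map_one, aeval_C, aeval_X, ← Algebra.smul_def, smul_smul]
    norm_num
  rw [← hsubst]
  refine hΛ.map_aeval_nonneg_of_nonneg_on_unit_cube (fun i => isSumSq_half_smul_one_add (hs i))
    (fun i => ?_) fun x hx => ?_
  · rw [hcompl]
    exact isSumSq_half_smul_one_add (by rw [neg_sq]; exact hs i)
  · rw [← coe_aeval_eq_eval, RingHom.coe_coe, aeval_bind₁]
    refine hq _ fun i => ?_
    obtain ⟨h₀, h₁⟩ := hx i
    simp only [map_sub, map_mul, map_one, aeval_C, aeval_X, Algebra.algebraMap_self_apply,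
      Set.mem_Icc]
    constructor <;> linarith

end Bernstein

/-! ### Positivity from factorial moment bounds -/

section Positivity

variable {R : Type*} [CommRing R] [Algebra ℝ R] {L : R →ₗ[ℝ] ℝ} {ι : Type*}

lemma sub_algebraMap_dvd_aeval_mul_sub_aeval_smul {A : Type*} [CommRing A] [Algebra ℝ A] (t : A)
    (δ : ℝ) (σ : ι → A) (q : MvPolynomial ι ℝ) :
    t - algebraMap ℝ A δ ∣ aeval (fun i => t * σ i) q - aeval (fun i => δ • σ i) q := by
  let π := Ideal.Quotient.mkₐ ℝ (Ideal.span {t - algebraMap ℝ A δ})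
  have ht : π t = π (algebraMap ℝ A δ) := Ideal.Quotient.eq.mpr (Ideal.mem_span_singleton_self _)
  have hπ : π (aeval (fun i => t * σ i) q) = π (aeval (fun i => δ • σ i) q) := by
    simp only [comp_aeval_apply, Algebra.smul_def, map_mul, ht]
  exact Ideal.mem_span_singleton.mp (Ideal.Quotient.eq.mp hπ)

lemma evalFunctional_aeval_X_mul (hL : NonnegOnSquares L) (δ : ℝ)
    (σ : ι → rapidlyDecreasing hL) (q : MvPolynomial ι ℝ) :
    evalFunctional hL δ (aeval (fun i => rapidlyDecreasing.X hL * σ i) q) =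
      evalFunctional hL δ (aeval (fun i => δ • σ i) q) := by
  obtain ⟨G, hG⟩ :=
    sub_algebraMap_dvd_aeval_mul_sub_aeval_smul (rapidlyDecreasing.X hL) δ σ q
  rw [← sub_eq_zero, ← map_sub, hG, sub_mul, map_sub, evalFunctional_X_mul, ← Algebra.smul_def,
    map_smul, smul_eq_mul, sub_self]

lemma X_mul_C_mul_substScaled_sincSeries (u : R) :
    PowerSeries.X * (PowerSeries.C u * substScaled u sincSeries) =
      substScaled u (PowerSeries.sin ℝ) := by
  rw [← sincSeries_mul_X, map_mul, substScaled, RingHom.comp_apply, RingHom.comp_apply,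
    PowerSeries.map_X, PowerSeries.rescale_X]
  ring

lemma constantCoeff_C_mul_substScaled_sincSeries (u : R) :
    (PowerSeries.C u * substScaled u sincSeries).constantCoeff = u := by
  rw [map_mul, PowerSeries.constantCoeff_C, ← PowerSeries.coeff_zero_eq_constantCoeff_apply,
    coeff_substScaled, PowerSeries.coeff_zero_eq_constantCoeff_apply, constantCoeff_sincSeries,
    pow_zero, one_smul, mul_one]

/-- The witness is the series `t⁻¹ sin (u t)`. -/
lemma exists_constantCoeff_eq_and_isSumSq_one_sub_sq (hL : NonnegOnSquares L) {u : R} {c : ℝ}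
    (hu : ∀ k : ℕ, L (u ^ (2 * k)) ≤ c * k.factorial) :
    ∃ σ : rapidlyDecreasing hL, σ.1.constantCoeff = u ∧
      IsSumSq (1 - (rapidlyDecreasing.X hL * σ) ^ 2) := by
  have hC : PowerSeries.C u ∈ rapidlyDecreasing hL := by
    rw [← Polynomial.coe_C]
    exact IsRapidlyDecreasing.coe_polynomial L _
  have hsinc : substScaled u sincSeries ∈ rapidlyDecreasing hL :=
    isRapidlyDecreasing_substScaled hL hu abs_coeff_sincSeries_le
  let cosu : rapidlyDecreasing hL :=
    ⟨substScaled u (PowerSeries.cos ℝ), isRapidlyDecreasing_substScaled hL hu abs_coeff_cos_le⟩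
  let σ : rapidlyDecreasing hL := ⟨_, mul_mem hC hsinc⟩
  have hpythagoras : (rapidlyDecreasing.X hL * σ) ^ 2 + cosu ^ 2 = 1 := by
    apply Subtype.ext
    change (PowerSeries.X * (PowerSeries.C u * substScaled u sincSeries)) ^ 2 +
      substScaled u (PowerSeries.cos ℝ) ^ 2 = 1
    rw [X_mul_C_mul_substScaled_sincSeries, ← map_pow, ← map_pow, ← map_add,
      sin_sq_add_cos_sq_powerSeries, map_one]
  refine ⟨σ, constantCoeff_C_mul_substScaled_sincSeries u, ?_⟩
  rw [← hpythagoras, add_sub_cancel_left]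
  exact isSumSq_sq cosu

lemma NonnegOnSquares.map_aeval_nonneg_of_pow_le_factorial [Finite ι] (hL : NonnegOnSquares L)
    {x : ι → R} {c : ℝ} (hx : ∀ i, ∀ k : ℕ, L (x i ^ (2 * k)) ≤ c * k.factorial)
    {p : MvPolynomial ι ℝ} (hp : ∀ z : ι → ℝ, 0 ≤ eval z p) : 0 ≤ L (aeval x p) := by
  choose σ hσ hσ_sq using fun i => exists_constantCoeff_eq_and_isSumSq_one_sub_sq hL (hx i)
  have hnonneg {δ : ℝ} (hδ : δ ≠ 0) : 0 ≤ evalFunctional hL δ (aeval σ p) := by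
    -- At `t = δ` the series `σ` is `δ⁻¹ • (t σ)`, and `t σ` lies in the cube.
    let q : MvPolynomial ι ℝ := bind₁ (fun i => C δ⁻¹ * X i) p
    have hq : aeval (fun i => δ • σ i) q = aeval σ p := by
      rw [aeval_bind₁]
      congr 2 with i
      rw [map_mul, aeval_C, aeval_X, ← Algebra.smul_def, smul_smul, inv_mul_cancel₀ hδ, one_smul]
    rw [← hq, ← evalFunctional_aeval_X_mul]
    refine (nonnegOnSquares_evalFunctional hL δ).map_aeval_nonneg_of_nonneg_on_cube hσ_sq
      fun z _ => ?_
    rw [← coe_aeval_eq_eval, RingHom.coe_coe, aeval_bind₁]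
    exact hp _
  have hlim := tendsto_evalFunctional_zero hL (aeval σ p)
  have hconst : (aeval σ p).1.constantCoeff = aeval x p := by
    have hmap := map_aeval σ
      (PowerSeries.constantCoeff.comp (rapidlyDecreasing hL).val.toRingHom) p
    exact hmap.trans <| eval₂Hom_congr
      (RingHom.ext fun r => PowerSeries.constantCoeff_C (algebraMap ℝ R r)) (funext hσ) rfl
  rw [hconst] at hlim
  exact ge_of_tendsto hlim (eventually_mem_nhdsWithin.mono fun δ hδ => hnonneg hδ)

end Positivity

/-! ### Separation by a functional with factorial moment bounds -/

section Separation

variable {E : Type*} [AddCommGroup E] [Module ℝ E] {s : Set E}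

lemma absorbent_of_forall_exists_pos_smul_mem (hs : StarConvex ℝ 0 s)
    (h : ∀ x, ∃ c : ℝ, 0 < c ∧ c • x ∈ s) : Absorbent ℝ s := by
  have hray (x : E) : ∀ᶠ a : ℝ in atTop, a⁻¹ • x ∈ s := by
    obtain ⟨c, hc, hx⟩ := h x
    filter_upwards [eventually_ge_atTop c⁻¹] with a ha
    have ha₀ : 0 < a := (inv_pos.mpr hc).trans_le ha
    have hscale : a⁻¹ • x = (a⁻¹ * c⁻¹) • c • x := by
      rw [smul_smul, inv_mul_cancel_right₀ hc.ne']
    rw [hscale]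
    refine hs.smul_mem hx (by positivity) ?_
    rwa [inv_mul_le_one₀ ha₀]
  rw [absorbent_iff_inv_smul]
  intro x
  rw [IsOrderBornology.cobounded_eq, eventually_sup]
  refine ⟨?_, hray x⟩
  filter_upwards [tendsto_neg_atBot_atTop.eventually (hray (-x))] with a ha
  simpa only [inv_neg, neg_smul_neg] using ha

lemma exists_linearMap_le_one_of_notMem (hs : Convex ℝ s) (hs₀ : 0 ∈ s) (hs' : Absorbent ℝ s)
    {x₀ : E} (hx₀ : x₀ ∉ s) : ∃ L : E →ₗ[ℝ] ℝ, (∀ x ∈ s, L x ≤ 1) ∧ 1 ≤ L x₀ := by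
  have hgauge : 1 ≤ gauge s x₀ := one_le_gauge_of_notMem (hs.starConvex hs₀) (hs' x₀) hx₀
  have hne : x₀ ≠ 0 := fun h => hx₀ (h ▸ hs₀)
  let g : E →ₗ.[ℝ] ℝ := LinearPMap.mkSpanSingleton x₀ (gauge s x₀) hne
  have hg : ∀ x : g.domain, g x ≤ gauge s x := by
    rintro ⟨x, hx⟩
    obtain ⟨t, rfl⟩ := Submodule.mem_span_singleton.mp hx
    rw [LinearPMap.mkSpanSingleton'_apply]
    rcases le_or_gt 0 t with ht | ht
    · rw [gauge_smul_of_nonneg ht]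
      rfl
    · exact (mul_nonpos_of_nonpos_of_nonneg ht.le (gauge_nonneg _)).trans (gauge_nonneg _)
  obtain ⟨L, hL, hL_le⟩ := exists_extension_of_le_sublinear _ (gauge s)
    (fun c hc x => gauge_smul_of_nonneg hc.le x) (gauge_add_le hs hs') hg
  refine ⟨L, fun x hx => (hL_le x).trans (gauge_le_one_of_mem hx), ?_⟩
  have hLx₀ : L x₀ = gauge s x₀ := (hL ⟨x₀, Submodule.mem_span_singleton_self x₀⟩).trans
    (LinearPMap.mkSpanSingleton_apply ℝ ℝ hne _)
  exact hgauge.trans_eq hLx₀.symm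

end Separation

section Theta

variable {n : ℕ}

lemma theta_eq_sum_product (n r : ℕ) : theta n r = ∑ j ∈ Finset.range (r + 1) ×ˢ Finset.univ,
    (1 / (j.1.factorial : ℝ)) • (X j.2 : MvPolynomial (Fin n) ℝ) ^ (2 * j.1) := by
  simp only [theta, Finset.sum_product, smul_eq_C_mul]

lemma isSumSq_smul_X_pow (i : Fin n) (k : ℕ) :
    IsSumSq ((1 / (k.factorial : ℝ)) • (X i : MvPolynomial (Fin n) ℝ) ^ (2 * k)) :=
  isSumSq_smul (by positivity) (isSumSq_pow_two_mul _ _)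

lemma isSumSq_theta (n r : ℕ) : IsSumSq (theta n r) := by
  rw [theta_eq_sum_product]
  exact IsSumSq.sum fun j _ => isSumSq_smul_X_pow j.2 j.1

lemma isSumSq_theta_sub_theta (n : ℕ) {r r' : ℕ} (h : r ≤ r') :
    IsSumSq (theta n r' - theta n r) := by
  rw [theta_eq_sum_product, theta_eq_sum_product]
  exact isSumSq_sum_sub_sum (Finset.product_subset_product_left (by gcongr))
    fun j => isSumSq_smul_X_pow j.2 j.1

lemma isSumSq_theta_sub_smul_X_pow (i : Fin n) {k r : ℕ} (hk : k ≤ r) :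
    IsSumSq (theta n r - (1 / (k.factorial : ℝ)) • X i ^ (2 * k)) := by
  rw [theta_eq_sum_product, ← Finset.sum_singleton
    (fun j : ℕ × Fin n => (1 / (j.1.factorial : ℝ)) • (X j.2 : MvPolynomial (Fin n) ℝ) ^ (2 * j.1))
    (k, i)]
  exact isSumSq_sum_sub_sum (by simpa [Nat.lt_succ_iff] using hk)
    fun j => isSumSq_smul_X_pow j.2 j.1

lemma isSumSq_smul_theta_sub_mono {q : MvPolynomial (Fin n) ℝ} {c c' : ℝ} {r r' : ℕ}
    (hq : IsSumSq (c • theta n r - q)) (hc : 0 ≤ c') (hcc' : c ≤ c') (hr : r ≤ r') :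
    IsSumSq (c' • theta n r' - q) := by
  have hsplit : c' • theta n r' - q =
      c' • (theta n r' - theta n r) + (c' - c) • theta n r + (c • theta n r - q) := by
    module
  rw [hsplit]
  exact ((isSumSq_smul hc (isSumSq_theta_sub_theta n hr)).add
    (isSumSq_smul (sub_nonneg.mpr hcc') (isSumSq_theta n r))).add hq

/-- `q ≤ c θ_r` for some `c ≥ 0` and `r`, in the order where nonnegative means sum of squares. -/
def IsThetaDominated (q : MvPolynomial (Fin n) ℝ) : Prop :=
  ∃ (c : ℝ) (r : ℕ), 0 ≤ c ∧ IsSumSq (c • theta n r - q)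

namespace IsThetaDominated

variable {p q : MvPolynomial (Fin n) ℝ}

lemma add (hp : IsThetaDominated p) (hq : IsThetaDominated q) : IsThetaDominated (p + q) := by
  obtain ⟨c₁, r₁, hc₁, h₁⟩ := hp
  obtain ⟨c₂, r₂, hc₂, h₂⟩ := hq
  refine ⟨c₁ + c₂, max r₁ r₂, add_nonneg hc₁ hc₂, ?_⟩
  rw [add_smul, add_sub_add_comm]
  exact (isSumSq_smul_theta_sub_mono h₁ hc₁ le_rfl (le_max_left r₁ r₂)).add
    (isSumSq_smul_theta_sub_mono h₂ hc₂ le_rfl (le_max_right r₁ r₂))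

lemma smul {a : ℝ} (ha : 0 ≤ a) (hq : IsThetaDominated q) : IsThetaDominated (a • q) := by
  obtain ⟨c, r, hc, h⟩ := hq
  refine ⟨a * c, r, mul_nonneg ha hc, ?_⟩
  rw [mul_smul, ← smul_sub]
  exact isSumSq_smul ha h

lemma of_isSumSq_sub (hq : IsThetaDominated q) (h : IsSumSq (q - p)) : IsThetaDominated p := by
  obtain ⟨c, r, hc, hr⟩ := hq
  exact ⟨c, r, hc, by simpa using hr.add h⟩

lemma X_pow_two_mul (i : Fin n) (k : ℕ) : IsThetaDominated (X i ^ (2 * k)) := by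
  refine ⟨k.factorial, k, by positivity, ?_⟩
  have h := isSumSq_smul (k.factorial.cast_nonneg (α := ℝ))
    (isSumSq_theta_sub_smul_X_pow i (le_refl k))
  rwa [smul_sub, smul_smul, mul_one_div_cancel (mod_cast k.factorial_ne_zero), one_smul] at h

variable [NeZero n]

lemma pow_two_mul (q : MvPolynomial (Fin n) ℝ) (k : ℕ) : IsThetaDominated (q ^ (2 * k)) := by
  induction q using MvPolynomial.induction_on generalizing k with
  | C a =>
    have h := (X_pow_two_mul (0 : Fin n) 0).smul ((even_two_mul k).pow_nonneg a)
    simpa only [mul_zero, pow_zero, smul_eq_C_mul, mul_one, map_pow] using h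
  | add p q hp hq =>
    have h : IsThetaDominated ((4 ^ k : ℝ) • (p ^ (2 * k) + q ^ (2 * k))) :=
      ((hp k).add (hq k)).smul (by positivity)
    exact h.of_isSumSq_sub (isSumSq_four_pow_smul_sub_add_pow p q k)
  | mul_X p i hp =>
    have h := ((hp (2 * k)).add (X_pow_two_mul i (2 * k))).smul (one_half_pos (α := ℝ)).le
    refine h.of_isSumSq_sub ?_
    rw [mul_pow, mul_comm 2 (2 * k), pow_mul p (2 * k), pow_mul (X i) (2 * k)]
    exact isSumSq_half_smul_sq_add_sq_sub_mul _ _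

protected lemma of_neZero (q : MvPolynomial (Fin n) ℝ) : IsThetaDominated q := by
  have h := ((pow_two_mul q 1).add (pow_two_mul 1 1)).smul (one_half_pos (α := ℝ)).le
  refine h.of_isSumSq_sub ?_
  simpa only [mul_one] using isSumSq_half_smul_sq_add_sq_sub_mul q 1

end IsThetaDominated

/-- The polynomials dominated by some `θ_r` in the order where nonnegative means sum of squares. It
plays the role of the unit ball in the separation argument. -/
def belowTheta (n : ℕ) : Set (MvPolynomial (Fin n) ℝ) :=
  {q | ∃ r, IsSumSq (theta n r - q)}

lemma neg_mem_belowTheta {q : MvPolynomial (Fin n) ℝ} (hq : IsSumSq q) : -q ∈ belowTheta n :=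
  ⟨0, by simpa only [sub_neg_eq_add] using (isSumSq_theta n 0).add hq⟩

lemma zero_mem_belowTheta (n : ℕ) : 0 ∈ belowTheta n := by
  simpa only [neg_zero] using neg_mem_belowTheta (n := n) IsSumSq.zero

lemma convex_belowTheta (n : ℕ) : Convex ℝ (belowTheta n) := by
  rintro p ⟨r₁, h₁⟩ q ⟨r₂, h₂⟩ a b ha hb hab
  refine ⟨max r₁ r₂, ?_⟩
  rw [← one_smul ℝ (theta n _)] at h₁ h₂
  have h₁' := isSumSq_smul_theta_sub_mono h₁ zero_le_one le_rfl (le_max_left r₁ r₂)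
  have h₂' := isSumSq_smul_theta_sub_mono h₂ zero_le_one le_rfl (le_max_right r₁ r₂)
  have hsplit : theta n (max r₁ r₂) - (a • p + b • q) =
      a • ((1 : ℝ) • theta n (max r₁ r₂) - p) + b • ((1 : ℝ) • theta n (max r₁ r₂) - q) := by
    obtain rfl : b = 1 - a := by linarith
    module
  rw [hsplit]
  exact (isSumSq_smul ha h₁').add (isSumSq_smul hb h₂')

lemma absorbent_belowTheta (n : ℕ) [NeZero n] : Absorbent ℝ (belowTheta n) := by
  refine absorbent_of_forall_exists_pos_smul_mem
    ((convex_belowTheta n).starConvex (zero_mem_belowTheta n)) fun q => ?_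
  obtain ⟨c, r, hc, h⟩ := IsThetaDominated.of_neZero q
  have h' := isSumSq_smul_theta_sub_mono h (by positivity) (le_add_of_nonneg_right zero_le_one)
    le_rfl
  refine ⟨(c + 1)⁻¹, by positivity, r, ?_⟩
  have h'' := isSumSq_smul (inv_nonneg.mpr (by positivity : 0 ≤ c + 1)) h'
  rwa [smul_sub, inv_smul_smul₀ (by positivity)] at h''

lemma nonnegOnSquares_of_le_one_on_belowTheta {L : MvPolynomial (Fin n) ℝ →ₗ[ℝ] ℝ}
    (hL : ∀ q ∈ belowTheta n, L q ≤ 1) : NonnegOnSquares L := by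
  intro a
  by_contra! ha
  have hneg : 0 < -L (a * a) := neg_pos.mpr ha
  have h := hL _ (neg_mem_belowTheta (isSumSq_smul (c := 2 / -L (a * a)) (by positivity)
    (IsSumSq.mul_self a)))
  rw [map_neg, map_smul, smul_eq_mul, ← mul_neg, div_mul_cancel₀ _ hneg.ne'] at h
  norm_num at h

lemma map_X_pow_le_factorial_of_le_one_on_belowTheta {L : MvPolynomial (Fin n) ℝ →ₗ[ℝ] ℝ}
    (hL : ∀ q ∈ belowTheta n, L q ≤ 1) (i : Fin n) (k : ℕ) :
    L (X i ^ (2 * k)) ≤ k.factorial := by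
  have h := hL _ ⟨k, isSumSq_theta_sub_smul_X_pow i le_rfl⟩
  rwa [map_smul, smul_eq_mul, one_div, inv_mul_le_one₀ (mod_cast k.factorial_pos)] at h

theorem exists_isSumSq_add_smul_theta [NeZero n] {p : MvPolynomial (Fin n) ℝ}
    (hp : ∀ x : Fin n → ℝ, 0 ≤ eval x p) {ε : ℝ} (hε : 0 < ε) :
    ∃ r, IsSumSq (p + ε • theta n r) := by
  by_contra! hnot
  have hmem : -(ε⁻¹ • p) ∉ belowTheta n := by
    rintro ⟨r, hr⟩
    refine hnot r ?_
    simpa only [sub_neg_eq_add, smul_add, smul_inv_smul₀ hε.ne', add_comm] using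
      isSumSq_smul hε.le hr
  obtain ⟨L, hL, hLp⟩ := exists_linearMap_le_one_of_notMem (convex_belowTheta n)
    (zero_mem_belowTheta n) (absorbent_belowTheta n) hmem
  have hnonneg : 0 ≤ L p := by
    have h := (nonnegOnSquares_of_le_one_on_belowTheta hL).map_aeval_nonneg_of_pow_le_factorial
      (c := 1) (by simpa using map_X_pow_le_factorial_of_le_one_on_belowTheta hL) hp
    rwa [aeval_X_left_apply] at h
  rw [map_neg, map_smul, smul_eq_mul] at hLp
  have : 0 ≤ ε⁻¹ * L p := by positivity
  linarith

end Theta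

/-! ### Penalty on the zero set -/

section Penalty

lemma exists_nonneg_forall_add_mul_nonneg {X : Type*} [TopologicalSpace X] {h G : X → ℝ}
    (hh : Continuous h) (hG : Continuous G) (hcompact : IsCompact {x | h x ≤ 0})
    (hG_nonneg : ∀ x, 0 ≤ G x) (hpos : ∀ x, G x = 0 → 0 < h x) :
    ∃ lam : ℝ, 0 ≤ lam ∧ ∀ x, 0 ≤ h x + lam * G x := by
  have hG_pos {x : X} (hx : h x ≤ 0) : 0 < G x :=
    (hG_nonneg x).lt_of_ne' fun h₀ => (hpos x h₀).not_ge hx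
  obtain ⟨M, hM⟩ := hcompact.bddAbove_image (f := fun x => -h x / G x)
    (hh.neg.continuousOn.div hG.continuousOn fun x hx => (hG_pos hx).ne')
  refine ⟨max M 0, le_max_right _ _, fun x => ?_⟩
  rcases le_or_gt (h x) 0 with hx | hx
  · have hle : -h x / G x ≤ max M 0 := (hM ⟨x, hx, rfl⟩).trans (le_max_left _ _)
    rw [div_le_iff₀ (hG_pos hx)] at hle
    linarith
  · have := mul_nonneg (le_max_right M 0) (hG_nonneg x)
    linarith

lemma eval_nonneg_of_isSumSq {ι : Type*} {p : MvPolynomial ι ℝ} (hp : IsSumSq p) (x : ι → ℝ) :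
    0 ≤ eval x p := by
  induction hp with
  | zero => rw [map_zero]
  | sq_add a _ ih =>
    rw [map_add, map_mul]
    exact add_nonneg (mul_self_nonneg _) ih

variable {n : ℕ}

lemma eval_X_pow_div_factorial_le_eval_theta (x : Fin n → ℝ) (i : Fin n) {k r : ℕ} (hk : k ≤ r) :
    x i ^ (2 * k) / k.factorial ≤ eval x (theta n r) := by
  have h := eval_nonneg_of_isSumSq (isSumSq_theta_sub_smul_X_pow i hk) x
  rw [map_sub, smul_eval, map_pow, eval_X, sub_nonneg] at h
  rwa [← one_div_mul_eq_div]

variable [NeZero n]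

lemma one_le_eval_theta (x : Fin n → ℝ) (r : ℕ) : 1 ≤ eval x (theta n r) := by
  simpa using eval_X_pow_div_factorial_le_eval_theta x 0 (Nat.zero_le r)

lemma exists_isCompact_setOf_eval_add_smul_theta_nonpos (f : MvPolynomial (Fin n) ℝ) {ε : ℝ}
    (hε : 0 < ε) : ∃ r, IsCompact {x | eval x (f + ε • theta n r) ≤ 0} := by
  obtain ⟨c, r, hc, hcr⟩ := IsThetaDominated.pow_two_mul f 1
  have hcr' := isSumSq_smul_theta_sub_mono hcr hc le_rfl (le_max_left r 1)
  refine ⟨max r 1, (isCompact_closedBall 0 √(c / ε ^ 2)).of_isClosed_subset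
    (isClosed_le (continuous_eval _) continuous_const) fun x hx => ?_⟩
  have hf_sq : eval x f ^ 2 ≤ c * eval x (theta n (max r 1)) := by
    simpa [sub_nonneg] using eval_nonneg_of_isSumSq hcr' x
  have hx' : eval x f + ε * eval x (theta n (max r 1)) ≤ 0 := by simpa using hx
  set t := eval x (theta n (max r 1))
  have ht : 0 < t := one_pos.trans_le (one_le_eval_theta x _)
  have ht_le : t ≤ c / ε ^ 2 := by
    have hsq : (ε * t) ^ 2 ≤ eval x f ^ 2 := by
      rw [← neg_sq (eval x f)]
      exact pow_le_pow_left₀ (by positivity) (by linarith) 2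
    rw [le_div_iff₀ (by positivity)]
    refine le_of_mul_le_mul_right ?_ ht
    linarith
  rw [mem_closedBall_zero_iff, pi_norm_le_iff_of_nonneg (Real.sqrt_nonneg _)]
  intro i
  have hxi : x i ^ 2 ≤ t := by
    simpa using eval_X_pow_div_factorial_le_eval_theta x i (le_max_right r 1)
  exact Real.abs_le_sqrt (hxi.trans ht_le)

lemma exists_eval_add_smul_theta_add_smul_nonneg {f G : MvPolynomial (Fin n) ℝ}
    (hG : ∀ x, 0 ≤ eval x G) (hf : ∀ x, eval x G = 0 → 0 ≤ eval x f) {ε : ℝ} (hε : 0 < ε) :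
    ∃ (r : ℕ) (lam : ℝ), 0 ≤ lam ∧ ∀ x, 0 ≤ eval x (f + ε • theta n r + lam • G) := by
  obtain ⟨r, hr⟩ := exists_isCompact_setOf_eval_add_smul_theta_nonpos f hε
  obtain ⟨lam, hlam, hnonneg⟩ := exists_nonneg_forall_add_mul_nonneg
    (continuous_eval (f + ε • theta n r)) (continuous_eval G) hr hG fun x hx => by
      have hθ := one_le_eval_theta x r
      have hfx := hf x hx
      rw [map_add, smul_eval]
      positivity
  exact ⟨r, lam, hlam, fun x => by simpa using hnonneg x⟩

end Penalty

section Main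

lemma eval_sum_sq_nonneg {ι κ : Type*} [Fintype κ] (g : κ → MvPolynomial ι ℝ) (x : ι → ℝ) :
    0 ≤ eval x (∑ j, g j ^ 2) :=
  eval_nonneg_of_isSumSq (IsSumSq.sum fun j _ => isSumSq_sq (g j)) x

lemma eval_eq_zero_of_eval_sum_sq_eq_zero {ι κ : Type*} [Fintype κ] (g : κ → MvPolynomial ι ℝ)
    {x : ι → ℝ} (hx : eval x (∑ j, g j ^ 2) = 0) (j : κ) : eval x (g j) = 0 := by
  simp only [map_sum, map_pow] at hx
  rw [Finset.sum_eq_zero_iff_of_nonneg fun j _ => sq_nonneg _] at hx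
  exact eq_zero_of_pow_eq_zero (hx j (Finset.mem_univ j))

variable {n : ℕ}

lemma isSOS_of_isSumSq {p : MvPolynomial (Fin n) ℝ} (hp : IsSumSq p) : IsSOS p := by
  induction hp with
  | zero => exact ⟨0, Fin.elim0, by simp⟩
  | sq_add a _ ih =>
    obtain ⟨k, q, rfl⟩ := ih
    exact ⟨k + 1, Fin.cons a q, by simp [Fin.sum_univ_succ, sq]⟩

lemma isSumSq_of_isEmpty_of_eval_nonneg {ι : Type*} [IsEmpty ι] {p : MvPolynomial ι ℝ}
    (hp : ∀ x, 0 ≤ eval x p) : IsSumSq p := by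
  rw [eq_C_of_isEmpty p, ← mul_one (C _), ← smul_eq_C_mul]
  refine isSumSq_smul ?_ IsSumSq.one
  have h := hp 0
  rwa [eq_C_of_isEmpty p, eval_C] at h

lemma exists_isSumSq_add_smul_of_isEmpty {ι : Type*} [IsEmpty ι] {f G : MvPolynomial ι ℝ}
    (hG : ∀ x, 0 ≤ eval x G) (hf : ∀ x, eval x G = 0 → 0 ≤ eval x f) :
    ∃ lam : ℝ, 0 ≤ lam ∧ IsSumSq (f + lam • G) := by
  refine ⟨|eval 0 f| / eval 0 G, div_nonneg (abs_nonneg _) (hG 0),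
    isSumSq_of_isEmpty_of_eval_nonneg fun x => ?_⟩
  obtain rfl := Subsingleton.elim x 0
  rw [map_add, smul_eval]
  rcases eq_or_ne (eval 0 G) 0 with hG₀ | hG₀
  · rw [hG₀, mul_zero, add_zero]
    exact hf 0 hG₀
  · rw [div_mul_cancel₀ _ hG₀]
    linarith [neg_abs_le (eval 0 f)]

lemma exists_isSumSq_add_smul_theta_add_smul [NeZero n] {f G : MvPolynomial (Fin n) ℝ}
    (hG : ∀ x, 0 ≤ eval x G) (hf : ∀ x, eval x G = 0 → 0 ≤ eval x f) {ε : ℝ} (hε : 0 < ε) :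
    ∃ (r₀ : ℕ) (lam : ℝ), 0 ≤ lam ∧ ∀ r, r₀ ≤ r → IsSumSq (f + ε • theta n r + lam • G) := by
  obtain ⟨r₁, lam, hlam, hnonneg⟩ :=
    exists_eval_add_smul_theta_add_smul_nonneg hG hf (half_pos hε)
  obtain ⟨r₂, hr₂⟩ := exists_isSumSq_add_smul_theta hnonneg (half_pos hε)
  refine ⟨max r₁ r₂, lam, hlam, fun r hr => ?_⟩
  have hsplit : f + ε • theta n r + lam • G =
      f + (ε / 2) • theta n r₁ + lam • G + (ε / 2) • theta n r₂ +
        (ε / 2) • (theta n r - theta n r₁ + (theta n r - theta n r₂)) := by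
    module
  rw [hsplit]
  exact hr₂.add <| isSumSq_smul (half_pos hε).le <|
    (isSumSq_theta_sub_theta n (le_of_max_le_left hr)).add
      (isSumSq_theta_sub_theta n (le_of_max_le_right hr))

end Main

theorem sos_approx_on_algebraic_set_single_scalar_general (n : ℕ) (f G : MvPolynomial (Fin n) ℝ)
    (hG : ∀ x, 0 ≤ eval x G) (hf : ∀ x, eval x G = 0 → 0 ≤ eval x f) :
    ∀ ε : ℝ, 0 < ε →
      ∃ (r₀ : ℕ) (lam : ℝ), 0 ≤ lam ∧
        ∀ r : ℕ, r₀ ≤ r → IsSOS (f + C ε * theta n r + C lam * G) := by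
  intro ε hε
  simp only [← smul_eq_C_mul]
  rcases eq_zero_or_neZero n with rfl | _
  · obtain ⟨lam, hlam, h⟩ := exists_isSumSq_add_smul_of_isEmpty hG hf
    exact ⟨0, lam, hlam, fun r _ => isSOS_of_isSumSq (by simpa [theta] using h)⟩
  · obtain ⟨r₀, lam, hlam, h⟩ := exists_isSumSq_add_smul_theta_add_smul hG hf hε
    exact ⟨r₀, lam, hlam, fun r hr => isSOS_of_isSumSq (h r hr)⟩

theorem sos_approx_on_algebraic_set_single_scalar (n m : ℕ)
    (g : Fin m → MvPolynomial (Fin n) ℝ) (f : MvPolynomial (Fin n) ℝ)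
    (hf : ∀ x : Fin n → ℝ, (∀ j, eval x (g j) = 0) → 0 ≤ eval x f) :
    ∀ ε : ℝ, 0 < ε →
      ∃ (r₀ : ℕ) (lam : ℝ), 0 ≤ lam ∧
        ∀ r : ℕ, r₀ ≤ r →
          IsSOS (f + C ε * theta n r + C lam * ∑ j, g j ^ 2) := by
  exact sos_approx_on_algebraic_set_single_scalar_general n f _ (eval_sum_sq_nonneg g) fun x hx =>
    hf x fun j => eval_eq_zero_of_eval_sum_sq_eq_zero g hx j
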